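/- Assume Σ₀ is a positive definite diagonal N_o × N_o matrix with tr(Σ₀^{-1}) = 1 and k(x, ·) is twice continuously differentiable in y with finite bounds C'_k = sup‖∇_y k‖₂ and C''_k = sup‖∇²_{yy} k‖_{2→2}. Let m = (q; y) ∈ ℝ^{N_s} × Ω_s^{N_s} with all q_n ≠ 0 and set w_n = √|q_n|. Then for all δm = (δq; δy) and τm = (τq; τy): ‖Σ₀^{-1/2} G''(m)(δm, τm)‖₂ ≤ C'_k( ‖(δq_n/w_n)_n‖₂ ‖(w_n τy_n)_n‖₂ + ‖(τq_n/w_n)_n‖₂ ‖(w_n δy_n)_n‖₂ ) + C''_k ‖(w_n δy_n)_n‖₂ ‖(w_n τy_n)_n‖₂. Consequently, with ‖δm‖_W² := (1/4)‖(δq_n/w_n)_n‖₂² + ‖(w_n δy_n)_n‖₂², one has ‖Σ₀^{-1/2} G''(m)(δm, τm)‖₂ ≤ (4C'_k + C''_k) ‖δm‖_W ‖τm‖_W. -/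

import Mathlib

/-!
Differentiating `G(q; y)_j = ∑ n, q_n k(x_j, y_n)` twice gives
`G''(m)(δ, τ)_j = ∑ n, (δq_n Dk(y_n) τy_n + τq_n Dk(y_n) δy_n + q_n D²k(y_n)(δy_n, τy_n))`.
Writing `|δq_n| ‖τy_n‖ = (|δq_n| / w_n) (w_n ‖τy_n‖)` with `w_n = √|q_n|`, and splitting `|q_n|` in the
last term as `w_n w_n`, the Cauchy–Schwarz inequality bounds every component by the same right-hand
side `B`. Since the weights `1 / σ0 j` sum to one, the weighted Euclidean norm of the vector is then
at most `B`. The second estimate follows from `‖δq / w‖ ≤ 2 ‖δ‖_W` and `‖w δy‖ ≤ ‖δ‖_W`.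
-/

noncomputable section

/-- The parameter-to-observation map `G(q; y)_j = Σ_n q_n k(x_j, y_n)`. -/
def Gfun {d dO No Ns : ℕ}
    (k : EuclideanSpace ℝ (Fin dO) → EuclideanSpace ℝ (Fin d) → ℝ)
    (x : Fin No → EuclideanSpace ℝ (Fin dO))
    (m : (Fin Ns → ℝ) × (Fin Ns → EuclideanSpace ℝ (Fin d))) : Fin No → ℝ :=
  fun j => ∑ n, m.1 n * k (x j) (m.2 n)

/-- Squared weighted `W`-norm of a perturbation, with weights built from `q`. -/
def WnormSq {d Ns : ℕ} (q : Fin Ns → ℝ)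
    (δ : (Fin Ns → ℝ) × (Fin Ns → EuclideanSpace ℝ (Fin d))) : ℝ :=
  (∑ n, (δ.1 n) ^ 2 / (4 * |q n|)) + ∑ n, |q n| * ‖δ.2 n‖ ^ 2

section Derivatives

variable {d dO No Ns : ℕ} {k : EuclideanSpace ℝ (Fin dO) → EuclideanSpace ℝ (Fin d) → ℝ}

lemma contDiff_Gfun (hk : ∀ x, ContDiff ℝ 2 (k x)) (x : Fin No → EuclideanSpace ℝ (Fin dO)) :
    ContDiff ℝ 2 (Gfun (Ns := Ns) k x) := by
  unfold Gfun
  refine contDiff_pi.2 fun j => ContDiff.sum fun n _ => ContDiff.mul ?_ ((hk (x j)).comp ?_)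
  · fun_prop
  · fun_prop

lemma hasDerivAt_line {E F : Type*} [NormedAddCommGroup E] [NormedSpace ℝ E]
    [NormedAddCommGroup F] [NormedSpace ℝ F] {f : E → F} {z : E} (hf : DifferentiableAt ℝ f z)
    (v : E) : HasDerivAt (fun s : ℝ => f (z + s • v)) (fderiv ℝ f z v) 0 := by
  have hl : HasDerivAt (fun s : ℝ => z + s • v) v 0 := by
    simpa using ((hasDerivAt_id (0 : ℝ)).smul_const v).const_add z
  have hf' : HasFDerivAt f (fderiv ℝ f z) (z + (0 : ℝ) • v) := by
    simpa using hf.hasFDerivAt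
  exact hf'.comp_hasDerivAt (0 : ℝ) hl

/-- For a `C²` function, the second derivative is the iterated directional derivative. -/
lemma hasDerivAt_fderiv_line {E F : Type*} [NormedAddCommGroup E] [NormedSpace ℝ E]
    [NormedAddCommGroup F] [NormedSpace ℝ F] {f : E → F} (hf : ContDiff ℝ 2 f) (z v w : E) :
    HasDerivAt (fun s : ℝ => fderiv ℝ f (z + s • v) w) (iteratedFDeriv ℝ 2 f z ![v, w]) 0 := by
  have hd : DifferentiableAt ℝ (fderiv ℝ f) z :=
    (hf.fderiv_right (m := 1) (by norm_num)).differentiable (by norm_num) z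
  have h := (hasDerivAt_line hd v).clm_apply (hasDerivAt_const (0 : ℝ) w)
  simpa [iteratedFDeriv_two_apply] using h

lemma hasDerivAt_affine (a b : ℝ) : HasDerivAt (fun s : ℝ => a + s * b) b 0 := by
  simpa using ((hasDerivAt_id (0 : ℝ)).mul_const b).const_add a

lemma fderiv_Gfun_apply (hk : ∀ x, ContDiff ℝ 2 (k x)) (x : Fin No → EuclideanSpace ℝ (Fin dO))
    (z τ : (Fin Ns → ℝ) × (Fin Ns → EuclideanSpace ℝ (Fin d))) (j : Fin No) :
    fderiv ℝ (Gfun k x) z τ j =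
      ∑ n, (τ.1 n * k (x j) (z.2 n) + z.1 n * fderiv ℝ (k (x j)) (z.2 n) (τ.2 n)) := by
  have h2 := hasDerivAt_pi.1
    (hasDerivAt_line ((contDiff_Gfun (Ns := Ns) hk x).differentiable (by norm_num) z) τ) j
  refine h2.unique ?_
  change HasDerivAt (fun s : ℝ => ∑ n, (z.1 n + s * τ.1 n) * k (x j) (z.2 n + s • τ.2 n)) _ 0
  refine HasDerivAt.fun_sum fun n _ => ?_
  have h := (hasDerivAt_affine (z.1 n) (τ.1 n)).fun_mul
    (hasDerivAt_line ((hk (x j)).differentiable (by norm_num) (z.2 n)) (τ.2 n))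
  simpa only [zero_smul, zero_mul, add_zero] using h

lemma iteratedFDeriv_Gfun_apply (hk : ∀ x, ContDiff ℝ 2 (k x))
    (x : Fin No → EuclideanSpace ℝ (Fin dO))
    (m δ τ : (Fin Ns → ℝ) × (Fin Ns → EuclideanSpace ℝ (Fin d))) (j : Fin No) :
    iteratedFDeriv ℝ 2 (Gfun k x) m ![δ, τ] j =
      ∑ n, (τ.1 n * fderiv ℝ (k (x j)) (m.2 n) (δ.2 n)
        + (δ.1 n * fderiv ℝ (k (x j)) (m.2 n) (τ.2 n)
          + m.1 n * iteratedFDeriv ℝ 2 (k (x j)) (m.2 n) ![δ.2 n, τ.2 n])) := by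
  have h2 := hasDerivAt_pi.1
    (hasDerivAt_fderiv_line (contDiff_Gfun (Ns := Ns) hk x) m δ τ) j
  refine h2.unique ?_
  simp only [fderiv_Gfun_apply hk]
  change HasDerivAt (fun s : ℝ => ∑ n, (τ.1 n * k (x j) (m.2 n + s • δ.2 n) +
    (m.1 n + s * δ.1 n) * fderiv ℝ (k (x j)) (m.2 n + s • δ.2 n) (τ.2 n))) _ 0
  refine HasDerivAt.fun_sum fun n _ => ?_
  have h := ((hasDerivAt_line ((hk (x j)).differentiable (by norm_num) (m.2 n))
    (δ.2 n)).const_mul (τ.1 n)).fun_add ((hasDerivAt_affine (m.1 n) (δ.1 n)).fun_mul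
      (hasDerivAt_fderiv_line (hk (x j)) (m.2 n) (δ.2 n) (τ.2 n)))
  simpa only [zero_smul, zero_mul, add_zero] using h

end Derivatives

/-- Cauchy–Schwarz after inserting the weight `√|q n|` and its inverse. -/
lemma sum_abs_mul_le {Ns : ℕ} (q a b : Fin Ns → ℝ) (hq : ∀ n, q n ≠ 0) :
    ∑ n, |a n| * b n ≤
      Real.sqrt (∑ n, a n ^ 2 / |q n|) * Real.sqrt (∑ n, |q n| * b n ^ 2) := by
  have h := Real.sum_mul_le_sqrt_mul_sqrt Finset.univ
    (fun n => |a n| / Real.sqrt |q n|) (fun n => Real.sqrt |q n| * b n)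
  simp only [div_pow, mul_pow, sq_abs, Real.sq_sqrt (abs_nonneg _)] at h
  refine le_of_eq_of_le (Finset.sum_congr rfl fun n _ => ?_) h
  have : Real.sqrt |q n| ≠ 0 := (Real.sqrt_pos.2 (abs_pos.2 (hq n))).ne'
  field_simp

lemma sum_weight_mul_le {Ns : ℕ} (q a b : Fin Ns → ℝ) :
    ∑ n, |q n| * (a n * b n) ≤
      Real.sqrt (∑ n, |q n| * a n ^ 2) * Real.sqrt (∑ n, |q n| * b n ^ 2) := by
  have h := Real.sum_mul_le_sqrt_mul_sqrt Finset.univ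
    (fun n => Real.sqrt |q n| * a n) (fun n => Real.sqrt |q n| * b n)
  simp only [mul_pow, Real.sq_sqrt (abs_nonneg _)] at h
  refine le_of_eq_of_le (Finset.sum_congr rfl fun n _ => ?_) h
  rw [mul_mul_mul_comm, Real.mul_self_sqrt (abs_nonneg _)]

/-- A weighted Euclidean norm whose weights sum to one is bounded by any componentwise bound. -/
lemma sqrt_sum_sq_div_le {No : ℕ} (σ v : Fin No → ℝ) (hσ : ∀ j, 0 < σ j)
    (htr : ∑ j, (σ j)⁻¹ = 1) {B : ℝ} (hB : 0 ≤ B) (hv : ∀ j, |v j| ≤ B) :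
    Real.sqrt (∑ j, v j ^ 2 / σ j) ≤ B := by
  refine Real.sqrt_le_iff.2 ⟨hB, ?_⟩
  calc ∑ j, v j ^ 2 / σ j ≤ ∑ j, B ^ 2 * (σ j)⁻¹ := by
        refine Finset.sum_le_sum fun j _ => ?_
        rw [div_eq_mul_inv]
        exact mul_le_mul_of_nonneg_right (sq_le_sq' (abs_le.1 (hv j)).1 (abs_le.1 (hv j)).2)
          (inv_pos.2 (hσ j)).le
    _ = B ^ 2 := by rw [← Finset.mul_sum, htr, mul_one]

lemma sqrt_position_le_Wnorm {d Ns : ℕ} (q : Fin Ns → ℝ)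
    (δ : (Fin Ns → ℝ) × (Fin Ns → EuclideanSpace ℝ (Fin d))) :
    Real.sqrt (∑ n, |q n| * ‖δ.2 n‖ ^ 2) ≤ Real.sqrt (WnormSq q δ) :=
  Real.sqrt_le_sqrt (le_add_of_nonneg_left (Finset.sum_nonneg fun n _ => by positivity))

lemma sqrt_amplitude_le_Wnorm {d Ns : ℕ} (q : Fin Ns → ℝ)
    (δ : (Fin Ns → ℝ) × (Fin Ns → EuclideanSpace ℝ (Fin d))) :
    Real.sqrt (∑ n, (δ.1 n) ^ 2 / |q n|) ≤ 2 * Real.sqrt (WnormSq q δ) := by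
  have h0 : 0 ≤ ∑ n, |q n| * ‖δ.2 n‖ ^ 2 := Finset.sum_nonneg fun n _ => by positivity
  have h1 : ∑ n, (δ.1 n) ^ 2 / |q n| = 4 * ∑ n, (δ.1 n) ^ 2 / (4 * |q n|) := by
    rw [Finset.mul_sum]
    refine Finset.sum_congr rfl fun n _ => ?_
    rw [mul_comm 4 |q n|, ← div_div]
    ring
  have h2 : 0 ≤ ∑ n, (δ.1 n) ^ 2 / (4 * |q n|) := Finset.sum_nonneg fun n _ => by positivity
  have hW : 0 ≤ WnormSq q δ := add_nonneg h2 h0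
  refine Real.sqrt_le_iff.2 ⟨by positivity, ?_⟩
  rw [mul_pow, Real.sq_sqrt hW, h1, WnormSq]
  linarith

/-- **Second-derivative estimate for the parameter-to-observation map:**
`‖Σ₀^{-1/2} G''(m)(δm, τm)‖₂ ≤ C'_k(‖δq/w‖₂ ‖w τy‖₂ + ‖τq/w‖₂ ‖w δy‖₂) + C''_k ‖w δy‖₂ ‖w τy‖₂`,
and consequently `≤ (4C'_k + C''_k) ‖δm‖_W ‖τm‖_W`. -/
theorem stmt_15 (d dO No Ns : ℕ) (hd : 1 ≤ d)
    (Ωs : Set (EuclideanSpace ℝ (Fin d))) (hΩc : IsCompact Ωs)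
    (hΩi : (interior Ωs).Nonempty)
    (Ωo : Set (EuclideanSpace ℝ (Fin dO))) (hΩo : IsCompact Ωo)
    (k : EuclideanSpace ℝ (Fin dO) → EuclideanSpace ℝ (Fin d) → ℝ)
    (hk : ∀ x, ContDiff ℝ 2 (k x))
    (x : Fin No → EuclideanSpace ℝ (Fin dO)) (hx : ∀ j, x j ∈ Ωo)
    (σ0 : Fin No → ℝ) (hσ0 : ∀ j, 0 < σ0 j) (htr : ∑ j, (σ0 j)⁻¹ = 1)
    (Ck' Ck'' : ℝ)
    (hCk1 : ∀ xx ∈ Ωo, ∀ yy ∈ Ωs, ‖fderiv ℝ (k xx) yy‖ ≤ Ck')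
    (hCk2 : ∀ xx ∈ Ωo, ∀ yy ∈ Ωs, ‖iteratedFDeriv ℝ 2 (k xx) yy‖ ≤ Ck'')
    (m : (Fin Ns → ℝ) × (Fin Ns → EuclideanSpace ℝ (Fin d)))
    (hq : ∀ n, m.1 n ≠ 0) (hy : ∀ n, m.2 n ∈ Ωs)
    (δm τm : (Fin Ns → ℝ) × (Fin Ns → EuclideanSpace ℝ (Fin d))) :
    Real.sqrt (∑ j, (iteratedFDeriv ℝ 2 (Gfun k x) m ![δm, τm] j) ^ 2 / σ0 j) ≤
        Ck' * (Real.sqrt (∑ n, (δm.1 n) ^ 2 / |m.1 n|) *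
              Real.sqrt (∑ n, |m.1 n| * ‖τm.2 n‖ ^ 2) +
            Real.sqrt (∑ n, (τm.1 n) ^ 2 / |m.1 n|) *
              Real.sqrt (∑ n, |m.1 n| * ‖δm.2 n‖ ^ 2)) +
          Ck'' * Real.sqrt (∑ n, |m.1 n| * ‖δm.2 n‖ ^ 2) *
            Real.sqrt (∑ n, |m.1 n| * ‖τm.2 n‖ ^ 2) ∧
      Real.sqrt (∑ j, (iteratedFDeriv ℝ 2 (Gfun k x) m ![δm, τm] j) ^ 2 / σ0 j) ≤
        (4 * Ck' + Ck'') * Real.sqrt (WnormSq m.1 δm) * Real.sqrt (WnormSq m.1 τm) := by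
  have hNo : Nonempty (Fin No) := by
    by_contra h
    rw [not_nonempty_iff] at h
    simp at htr
  obtain ⟨y0, hy0⟩ := hΩi.mono interior_subset
  obtain ⟨j0⟩ := hNo
  have hC1 : 0 ≤ Ck' := (norm_nonneg _).trans (hCk1 _ (hx j0) _ hy0)
  have hC2 : 0 ≤ Ck'' := (norm_nonneg _).trans (hCk2 _ (hx j0) _ hy0)
  have h1 := sum_abs_mul_le m.1 δm.1 (fun n => ‖τm.2 n‖) hq
  have h2 := sum_abs_mul_le m.1 τm.1 (fun n => ‖δm.2 n‖) hq
  have h3 := sum_weight_mul_le m.1 (fun n => ‖δm.2 n‖) (fun n => ‖τm.2 n‖)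
  have hbδ := sqrt_position_le_Wnorm m.1 δm
  have hbτ := sqrt_position_le_Wnorm m.1 τm
  have haδ := sqrt_amplitude_le_Wnorm m.1 δm
  have haτ := sqrt_amplitude_le_Wnorm m.1 τm
  have hcomp : ∀ j, |iteratedFDeriv ℝ 2 (Gfun k x) m ![δm, τm] j| ≤
      Ck' * (∑ n, |δm.1 n| * ‖τm.2 n‖ + ∑ n, |τm.1 n| * ‖δm.2 n‖) +
        Ck'' * ∑ n, |m.1 n| * (‖δm.2 n‖ * ‖τm.2 n‖) := by
    intro j
    rw [iteratedFDeriv_Gfun_apply hk, ← Finset.sum_add_distrib, Finset.mul_sum, Finset.mul_sum,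
      ← Finset.sum_add_distrib]
    refine (Finset.abs_sum_le_sum_abs _ _).trans (Finset.sum_le_sum fun n _ => ?_)
    have e1 : ∀ v, |fderiv ℝ (k (x j)) (m.2 n) v| ≤ Ck' * ‖v‖ := fun v =>
      ContinuousLinearMap.le_of_opNorm_le _ (hCk1 _ (hx j) _ (hy n)) v
    have e2 : |iteratedFDeriv ℝ 2 (k (x j)) (m.2 n) ![δm.2 n, τm.2 n]| ≤
        Ck'' * (‖δm.2 n‖ * ‖τm.2 n‖) := by
      have := ContinuousMultilinearMap.le_of_opNorm_le (hCk2 _ (hx j) _ (hy n))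
        ![δm.2 n, τm.2 n]
      simpa [Fin.prod_univ_two] using this
    refine (abs_add_le _ _).trans ?_
    refine (add_le_add_right (abs_add_le _ _) _).trans ?_
    rw [abs_mul, abs_mul, abs_mul]
    have f1 := mul_le_mul_of_nonneg_left (e1 (δm.2 n)) (abs_nonneg (τm.1 n))
    have f2 := mul_le_mul_of_nonneg_left (e1 (τm.2 n)) (abs_nonneg (δm.1 n))
    have f3 := mul_le_mul_of_nonneg_left e2 (abs_nonneg (m.1 n))
    linarith
  set aδ := Real.sqrt (∑ n, (δm.1 n) ^ 2 / |m.1 n|)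
  set aτ := Real.sqrt (∑ n, (τm.1 n) ^ 2 / |m.1 n|)
  set bδ := Real.sqrt (∑ n, |m.1 n| * ‖δm.2 n‖ ^ 2)
  set bτ := Real.sqrt (∑ n, |m.1 n| * ‖τm.2 n‖ ^ 2)
  set Wδ := Real.sqrt (WnormSq m.1 δm)
  set Wτ := Real.sqrt (WnormSq m.1 τm)
  have pbδ : 0 ≤ bδ := Real.sqrt_nonneg _
  have pbτ : 0 ≤ bτ := Real.sqrt_nonneg _
  have paδ : 0 ≤ aδ := Real.sqrt_nonneg _
  have paτ : 0 ≤ aτ := Real.sqrt_nonneg _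
  have pWδ : 0 ≤ Wδ := Real.sqrt_nonneg _
  have pWτ : 0 ≤ Wτ := Real.sqrt_nonneg _
  have hmain : Real.sqrt (∑ j, (iteratedFDeriv ℝ 2 (Gfun k x) m ![δm, τm] j) ^ 2 / σ0 j) ≤
      Ck' * (aδ * bτ + aτ * bδ) + Ck'' * bδ * bτ := by
    refine sqrt_sum_sq_div_le σ0 _ hσ0 htr (by positivity) fun j => (hcomp j).trans ?_
    rw [mul_assoc]
    exact add_le_add (mul_le_mul_of_nonneg_left (add_le_add h1 h2) hC1)
      (mul_le_mul_of_nonneg_left h3 hC2)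
  refine ⟨hmain, hmain.trans ?_⟩
  have g1 : aδ * bτ ≤ 2 * Wδ * Wτ := mul_le_mul haδ hbτ pbτ (by positivity)
  have g2 : aτ * bδ ≤ 2 * Wτ * Wδ := mul_le_mul haτ hbδ pbδ (by positivity)
  have g3 : bδ * bτ ≤ Wδ * Wτ := mul_le_mul hbδ hbτ pbτ pWδ
  have g4 := mul_le_mul_of_nonneg_left (add_le_add g1 g2) hC1
  have g5 := mul_le_mul_of_nonneg_left g3 hC2
  linarith
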